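/- The modified Nitsche bilinear form A*(u,v) := a(u,v) + N^c(u,v) + N^c(v,u) + 2·a(L(u),L(v)) + s(u,v) satisfies the continuity estimate |A*(u,v)| ≤ (4 + 2·c_tr)·|||u|||·|||v||| for all u, v ∈ V, where |||u|||² := a(u,u) + b(u,u) + s(u,u). (Continuity of the parameter-free formulation with a constant depending on the trace inverse constant c_tr, Section 4.1 of the paper.) -/

import Mathlib

/-! With `E w = a(w,w) + b(w) + s(w,w)`, Cauchy–Schwarz in `ℝ³` for the vectors
`(√a(u,u), √b(u), √s(u,u))` and `(√a(v,v), √s(v,v), √b(v))` bounds `a(u,v)` and the two consistency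
terms together by `√E(u) √E(v)`, because the transposed consistency terms pair `b` with `s`. The two
remaining terms are controlled by `s` alone: `s(u,v)` contributes `1` and, by lifting stability,
`2 a(Lu,Lv)` contributes `2 c_tr`. The total is `2 + 2 c_tr`. -/

lemma abs_le_sqrt_mul_sqrt {x p q : ℝ} (hp : 0 ≤ p) (h : x ^ 2 ≤ p * q) : |x| ≤ √p * √q :=
  (Real.abs_le_sqrt h).trans_eq (Real.sqrt_mul hp q)

lemma sum_three_sqrt_mul_sqrt_le {p₁ p₂ p₃ q₁ q₂ q₃ : ℝ}
    (hp₁ : 0 ≤ p₁) (hp₂ : 0 ≤ p₂) (hp₃ : 0 ≤ p₃) (hq₁ : 0 ≤ q₁) (hq₂ : 0 ≤ q₂) (hq₃ : 0 ≤ q₃) :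
    √p₁ * √q₁ + √p₂ * √q₂ + √p₃ * √q₃ ≤ √(p₁ + p₂ + p₃) * √(q₁ + q₂ + q₃) := by
  have hp : ∀ i, 0 ≤ ![p₁, p₂, p₃] i := by simp [Fin.forall_fin_succ, *]
  have hq : ∀ i, 0 ≤ ![q₁, q₂, q₃] i := by simp [Fin.forall_fin_succ, *]
  simpa [Fin.sum_univ_three] using Real.sum_sqrt_mul_sqrt_le Finset.univ hp hq

section

variable {V : Type*} [AddCommGroup V] [Module ℝ V]

lemma abs_apply_le_sqrt_mul_sqrt {B : LinearMap.BilinForm ℝ V} (hB : B.IsPosSemidef) (x y : V) :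
    |B x y| ≤ √(B x x) * √(B y y) :=
  abs_le_sqrt_mul_sqrt (hB.nonneg x) (B.apply_sq_le_of_symm hB.nonneg ⟨hB.isSymm.eq⟩ x y)

lemma abs_apply_le_mul_sqrt_mul_sqrt {B : LinearMap.BilinForm ℝ V} (hB : B.IsPosSemidef)
    {c p q : ℝ} (hc : 0 ≤ c) {x y : V} (hx : B x x ≤ c * p) (hy : B y y ≤ c * q) :
    |B x y| ≤ c * (√p * √q) :=
  calc |B x y| ≤ √(B x x) * √(B y y) := abs_apply_le_sqrt_mul_sqrt hB x y
    _ ≤ √(c * p) * √(c * q) := by gcongr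
    _ = (√c * √c) * (√p * √q) := by rw [Real.sqrt_mul hc, Real.sqrt_mul hc, mul_mul_mul_comm]
    _ = c * (√p * √q) := by rw [Real.mul_self_sqrt hc]

/-- The modified Nitsche form `A*(u,v)`, with the consistency form `N^c(u,v)` written out as
`a(L(v), u)`. The lifting `L` may be nonlinear. -/
def modifiedNitscheForm (a s : LinearMap.BilinForm ℝ V) (L : V → V) (u v : V) : ℝ :=
  a u v + a (L v) u + a (L u) v + 2 * a (L u) (L v) + s u v

/-- The norm `|||u|||` in which continuity is measured. The boundary contribution `b` enters only
through its values `b(u,u)`, so it is encoded as a function of `u`. -/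
noncomputable def nitscheNorm (a s : LinearMap.BilinForm ℝ V) (b : V → ℝ) (u : V) : ℝ :=
  √(a u u + b u + s u u)

variable {a s : LinearMap.BilinForm ℝ V} {b : V → ℝ}

lemma nitscheNorm_nonneg (u : V) : 0 ≤ nitscheNorm a s b u := Real.sqrt_nonneg _

lemma sqrt_apply_self_le_nitscheNorm (ha : a.IsPosSemidef) (hb : ∀ u, 0 ≤ b u) (u : V) :
    √(s u u) ≤ nitscheNorm a s b u :=
  Real.sqrt_le_sqrt (le_add_of_nonneg_left (add_nonneg (ha.nonneg u) (hb u)))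

lemma abs_apply_add_abs_consistency_le (ha : a.IsPosSemidef) (hs : s.IsPosSemidef)
    (hb : ∀ u, 0 ≤ b u) {L : V → V} (hN : ∀ u v, a (L v) u ^ 2 ≤ b u * s v v) (u v : V) :
    |a u v| + |a (L v) u| + |a (L u) v| ≤ nitscheNorm a s b u * nitscheNorm a s b v := by
  have hNuv : |a (L v) u| ≤ √(b u) * √(s v v) := abs_le_sqrt_mul_sqrt (hb u) (hN u v)
  have hNvu : |a (L u) v| ≤ √(s u u) * √(b v) :=
    abs_le_sqrt_mul_sqrt (hs.nonneg u) ((hN v u).trans_eq (mul_comm _ _))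
  calc |a u v| + |a (L v) u| + |a (L u) v|
      ≤ √(a u u) * √(a v v) + √(b u) * √(s v v) + √(s u u) * √(b v) := by
        gcongr
        exact abs_apply_le_sqrt_mul_sqrt ha u v
    _ ≤ √(a u u + b u + s u u) * √(a v v + s v v + b v) :=
        sum_three_sqrt_mul_sqrt_le (ha.nonneg u) (hb u) (hs.nonneg u)
          (ha.nonneg v) (hs.nonneg v) (hb v)
    _ = nitscheNorm a s b u * nitscheNorm a s b v := by
        rw [nitscheNorm, nitscheNorm, add_right_comm (a v v)]

theorem modified_nitsche_continuity_general (ha : a.IsPosSemidef) (hs : s.IsPosSemidef)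
    (hb : ∀ u, 0 ≤ b u) {L : V → V} (hN : ∀ u v, a (L v) u ^ 2 ≤ b u * s v v)
    {c : ℝ} (hc : 0 ≤ c) (hL : ∀ w, a (L w) (L w) ≤ c * s w w) (u v : V) :
    |modifiedNitscheForm a s L u v| ≤
      (2 + 2 * c) * nitscheNorm a s b u * nitscheNorm a s b v := by
  have htriangle : |modifiedNitscheForm a s L u v| ≤
      (|a u v| + |a (L v) u| + |a (L u) v|) + 2 * |a (L u) (L v)| + |s u v| := by
    grind [modifiedNitscheForm]
  calc |modifiedNitscheForm a s L u v|
      ≤ (|a u v| + |a (L v) u| + |a (L u) v|) + 2 * |a (L u) (L v)| + |s u v| := htriangle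
    _ ≤ nitscheNorm a s b u * nitscheNorm a s b v
          + 2 * (c * (√(s u u) * √(s v v))) + √(s u u) * √(s v v) := by
        gcongr
        · exact abs_apply_add_abs_consistency_le ha hs hb hN u v
        · exact abs_apply_le_mul_sqrt_mul_sqrt ha hc (hL u) (hL v)
        · exact abs_apply_le_sqrt_mul_sqrt hs u v
    _ = nitscheNorm a s b u * nitscheNorm a s b v
          + (1 + 2 * c) * (√(s u u) * √(s v v)) := by ring
    _ ≤ nitscheNorm a s b u * nitscheNorm a s b v
          + (1 + 2 * c) * (nitscheNorm a s b u * nitscheNorm a s b v) := by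
        have hsqrt := sqrt_apply_self_le_nitscheNorm (s := s) ha hb
        gcongr
        · exact nitscheNorm_nonneg u
        · exact hsqrt u
        · exact hsqrt v
    _ = (2 + 2 * c) * nitscheNorm a s b u * nitscheNorm a s b v := by ring

end

/-- Continuity of the parameter-free formulation (Section 4.1 of the paper):
`|A*(u,v)| ≤ (4 + 2·c_tr)·|||u|||·|||v|||`, where
`|||u|||² := a(u,u) + b(u,u) + s(u,u)`. -/
theorem modified_nitsche_continuity
    {V : Type*} [AddCommGroup V] [Module ℝ V]
    (a s b : V →ₗ[ℝ] V →ₗ[ℝ] ℝ)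
    (hasymm : ∀ u v : V, a u v = a v u) (hapos : ∀ u : V, 0 ≤ a u u)
    (hssymm : ∀ u v : V, s u v = s v u) (hspos : ∀ u : V, 0 ≤ s u u)
    (hbsymm : ∀ u v : V, b u v = b v u) (hbpos : ∀ u : V, 0 ≤ b u u)
    (L : V →ₗ[ℝ] V)
    (Nc : V → V → ℝ) (hNc : ∀ u v : V, Nc u v = a (L v) u)
    (hNcbound : ∀ u v : V, (Nc u v) ^ 2 ≤ b u u * s v v)
    (ctr : ℝ) (hctr : 0 < ctr)
    (hlift : ∀ w : V, a (L w) (L w) ≤ ctr * s w w)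
    (Astar : V → V → ℝ)
    (hAstar : ∀ u v : V,
      Astar u v = a u v + Nc u v + Nc v u + 2 * a (L u) (L v) + s u v) :
    ∀ u v : V,
      |Astar u v| ≤ (4 + 2 * ctr) * Real.sqrt (a u u + b u u + s u u) *
        Real.sqrt (a v v + b v v + s v v) := by
  intro u v
  calc |Astar u v| = |modifiedNitscheForm a s L u v| := by
        simp only [hAstar, hNc, modifiedNitscheForm]
    _ ≤ (2 + 2 * ctr) * nitscheNorm a s (fun w ↦ b w w) u * nitscheNorm a s (fun w ↦ b w w) v :=
        modified_nitsche_continuity_general ⟨⟨hasymm⟩, ⟨hapos⟩⟩ ⟨⟨hssymm⟩, ⟨hspos⟩⟩ hbpos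
          (fun x y ↦ hNc x y ▸ hNcbound x y) hctr.le hlift u v
    _ ≤ (4 + 2 * ctr) * √(a u u + b u u + s u u) * √(a v v + b v v + s v v) := by
        unfold nitscheNorm
        gcongr
        norm_num
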